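/- arXiv:2511.05840 — 7 statements merged into one kernel-verified Lean document; each statement's English description precedes it below -/
import Mathlib

section
/- Let M be a set of Borel probability measures on ℝ, S:ℝ²→ℝ a loss function, and (ρ,φ):M→ℝ×I(ℝ) a Bayes pair with loss function S. Suppose φ has an identification function v:ℝ²→ℝ. Then for every function h:ℝ²→ℝ that is not constantly 0, the map (x,r,z) ↦ (v(x,z), h(r,z)(S(x,z)−r)) is an identification function for (ρ,φ): for all F∈M, if r=ρ(F) and z∈φ(F), then ∫v(x,z)dF(x)=0 and ∫h(r,z)(S(x,z)−r)dF(x)=0. If moreover v is a strict identification function for φ and h(r,z)≠0 for all (r,z)∈ℝ², then this map is a strict identification function for (ρ,φ): conversely, ∫v(x,z)dF(x)=0 and ∫h(r,z)(S(x,z)−r)dF(x)=0 imply z∈φ(F) and r=ρ(F). -/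
open MeasureTheory

/-- A Bayes pair `(ρ, φ)` with loss function `S`, where `φ` has an
identification function `v`, admits the identification function
`(x, r, z) ↦ (v(x,z), h(r,z) * (S(x,z) − r))` for every `h` not constantly zero;
if moreover `v` is strict and `h` never vanishes, this identification function is strict. -/
theorem stmt0
    (M : Set (Measure ℝ)) (hprob : ∀ F ∈ M, IsProbabilityMeasure F)
    (S : ℝ → ℝ → ℝ) (ρ : Measure ℝ → ℝ) (φ : Measure ℝ → Set ℝ)
    -- `φ F` is a (nonempty) closed real interval
    (hInterval : ∀ F ∈ M, ∃ a b : ℝ, a ≤ b ∧ φ F = Set.Icc a b)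
    -- all integrals of the loss are finite
    (hSint : ∀ F ∈ M, ∀ a : ℝ, Integrable (fun x => S x a) F)
    -- Bayes pair: `φ F` is the argmin of the expected loss, `ρ F` its minimal value
    (hargmin : ∀ F ∈ M, ∀ a : ℝ, a ∈ φ F ↔ ∀ b : ℝ, ∫ x, S x a ∂F ≤ ∫ x, S x b ∂F)
    (hmin : ∀ F ∈ M, ∀ a ∈ φ F, ρ F = ∫ x, S x a ∂F)
    -- `v` is an identification function for `φ`
    (v : ℝ → ℝ → ℝ)
    (hv : ∀ F ∈ M, ∀ z ∈ φ F, (∫ x, v x z ∂F) = 0) :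
    -- (1) identification function for `(ρ, φ)` for every `h` not constantly zero
    (∀ h : ℝ → ℝ → ℝ, (¬ ∀ r z : ℝ, h r z = 0) →
      ∀ F ∈ M, ∀ r z : ℝ, r = ρ F → z ∈ φ F →
        (∫ x, v x z ∂F) = 0 ∧ (∫ x, h r z * (S x z - r) ∂F) = 0) ∧
    -- (2) strictness: if `v` is a strict identification function for `φ`
    -- and `h` never vanishes
    ((∀ F ∈ M, ∀ z : ℝ, (∫ x, v x z ∂F) = 0 → z ∈ φ F) →
      ∀ h : ℝ → ℝ → ℝ, (∀ r z : ℝ, h r z ≠ 0) →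
      ∀ F ∈ M, ∀ r z : ℝ,
        (∫ x, v x z ∂F) = 0 → (∫ x, h r z * (S x z - r) ∂F) = 0 →
        z ∈ φ F ∧ r = ρ F) := by
  have key : ∀ F ∈ M, ∀ c r z : ℝ,
      (∫ x, c * (S x z - r) ∂F) = c * ((∫ x, S x z ∂F) - r) := by
    intro F hF c r z
    haveI := hprob F hF
    rw [integral_const_mul, integral_sub (hSint F hF z) (integrable_const r)]
    simp
  refine ⟨?_, ?_⟩
  · intro h _ F hF r z hr hz
    refine ⟨hv F hF z hz, ?_⟩
    rw [key F hF, hr, ← hmin F hF z hz, sub_self, mul_zero]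
  · intro hs h hh F hF r z h1 h2
    have hz := hs F hF z h1
    refine ⟨hz, ?_⟩
    rw [key F hF, ← hmin F hF z hz] at h2
    have h3 := (mul_eq_zero.mp h2).resolve_left (hh r z)
    linarith
end

section
/- In the setting of the preceding identification-function construction (M supported in 𝒦⊆ℝ, identification function (v,V) for ψ=(ρ,φ), and inf{V(x,a,b) : x∈𝒦, (a,b)∈ψ(M)} ≥ −1), suppose in addition that a ↦ V(x,a,b) is decreasing for every fixed x∈𝒦 and b. Then for every random variable L with law F_L∈M and every (r,z)∈ψ(M) with r ≥ ρ(F_L) and z∈φ(F_L), one has E[1+V(L,r,z)] ≤ 1; that is, E = 1+V(L,r,z) is a precise e-variable for the one-sided hypothesis H(ψ): r ≥ ρ(F_L) and z∈φ(F_L), as F_L ranges over M. -/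
open MeasureTheory

/-- in the setting of the identification-function construction,
if moreover `a ↦ V(x,a,b)` is decreasing, then `E = 1 + V(L,r,z)` has expectation
at most `1` under the one-sided null `r ≥ ρ(F_L)`, `z ∈ φ(F_L)`, i.e. `E` is a
precise e-variable for `H(ψ)` (expectation equal to `1` when `r = ρ(F_L)`). -/
theorem stmt2 {k : ℕ}
    (𝒦 : Set ℝ) (M : Set (Measure ℝ))
    (hprob : ∀ F ∈ M, IsProbabilityMeasure F)
    (hsupp : ∀ F ∈ M, F 𝒦ᶜ = 0)
    (ρ : Measure ℝ → ℝ) (φ : Measure ℝ → Set (Fin k → ℝ))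
    (v : ℝ → (Fin k → ℝ) → (Fin k → ℝ)) (V : ℝ → ℝ → (Fin k → ℝ) → ℝ)
    (hVint : ∀ F ∈ M, ∀ (a : ℝ) (b : Fin k → ℝ), Integrable (fun x => V x a b) F)
    -- `(v, V)` is an identification function for `ψ = (ρ, φ)`
    (hident : ∀ F ∈ M, ∀ (a : ℝ) (b : Fin k → ℝ), a = ρ F → b ∈ φ F →
      (∫ x, v x b ∂F) = 0 ∧ (∫ x, V x a b ∂F) = 0)
    -- `inf { V(x,a,b) : x ∈ 𝒦, (a,b) ∈ ψ(M) } ≥ −1`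
    (hbound : ∀ x ∈ 𝒦, ∀ (a : ℝ) (b : Fin k → ℝ),
      (∃ F ∈ M, a = ρ F ∧ b ∈ φ F) → -1 ≤ V x a b)
    -- `a ↦ V(x,a,b)` is decreasing for every fixed `x ∈ 𝒦` and `b`
    (hmono : ∀ x ∈ 𝒦, ∀ b : Fin k → ℝ, Antitone (fun a => V x a b)) :
    ∀ F ∈ M, ∀ (r : ℝ) (z : Fin k → ℝ),
      (∃ G ∈ M, r = ρ G ∧ z ∈ φ G) →
      (∀ x ∈ 𝒦, 0 ≤ 1 + V x r z) ∧
      -- e-variable property under the one-sided null `H(ψ)`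
      (ρ F ≤ r → z ∈ φ F → (∫ x, (1 + V x r z) ∂F) ≤ 1) ∧
      -- preciseness: equality at the boundary of the null
      (r = ρ F → z ∈ φ F → (∫ x, (1 + V x r z) ∂F) = 1) := by
  intro F hF r z hG
  have := hprob F hF
  have key : ∫ x, (1 + V x r z) ∂F = 1 + ∫ x, V x r z ∂F := by
    rw [integral_add (integrable_const _) (hVint F hF r z)]
    simp
  refine ⟨fun x hx => by linarith [hbound x hx r z hG], fun hr hz => ?_, fun hr hz => ?_⟩
  · have h0 := (hident F hF (ρ F) z rfl hz).2
    have hae : ∀ᵐ x ∂F, x ∈ 𝒦 := hsupp F hF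
    have hle : ∫ x, V x r z ∂F ≤ ∫ x, V x (ρ F) z ∂F := by
      apply integral_mono_ae (hVint F hF r z) (hVint F hF (ρ F) z)
      filter_upwards [hae] with x hx
      exact hmono x hx z hr
    rw [key]
    linarith
  · rw [key, (hident F hF r z hr hz).2]
    simp
end

section
/- Let M be a set of Borel probability measures supported in 𝒦⊆ℝ and ψ=[ψ⁻,ψ⁺]:M→I(ℝ) an interval-valued functional that is identifiable with a strict identification function V:ℝ²→ℝ such that a↦V(x,a) is decreasing for each x and inf{V(x,a) : x∈𝒦, a∈ψ(M)} ≥ −1. Let h:ℝ→[0,1] and define e(x,a)=1+h(a)V(x,a). Then for every random variable L with law F_L∈M and every r∈ψ(M): (a) e(L,r) ≥ 0; (b) if r ≥ ψ⁻(F_L) then E[e(L,r)] ≤ 1, with equality whenever r∈ψ(F_L); and (c) if r < ψ⁻(F_L) and h(r) > 0, then E[e(L,r)] > 1. In particular, e(L,r) is a precise e-variable for both H(ψ): r ≥ ψ⁻(F_L) and H̃(ψ): r ∈ ψ(F_L), as F_L ranges over M. -/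
open MeasureTheory

/-- sufficiency direction of the single-dimensional characterization:
for an interval-valued identifiable functional `ψ = [ψ⁻, ψ⁺]` with a strict
identification function `V` decreasing in its second argument and bounded below
by `−1` on `𝒦 × ψ(M)`, and any `h : ℝ → [0,1]`, the function
`e(x,a) = 1 + h(a) V(x,a)` gives a precise e-variable `e(L,r)` for the hypotheses
`H(ψ) : r ≥ ψ⁻(F_L)` and `H̃(ψ) : r ∈ ψ(F_L)`, with expectation `> 1` when
`r < ψ⁻(F_L)` and `h(r) > 0`. -/
theorem stmt3
    (𝒦 : Set ℝ) (M : Set (Measure ℝ))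
    (hprob : ∀ F ∈ M, IsProbabilityMeasure F)
    (hsupp : ∀ F ∈ M, F 𝒦ᶜ = 0)
    (ψm ψp : Measure ℝ → ℝ) (hψ : ∀ F ∈ M, ψm F ≤ ψp F)
    (V : ℝ → ℝ → ℝ)
    (hVint : ∀ F ∈ M, ∀ a : ℝ, Integrable (fun x => V x a) F)
    -- `a ↦ V(x,a)` is decreasing
    (hmono : ∀ x : ℝ, Antitone (V x))
    -- `inf { V(x,a) : x ∈ 𝒦, a ∈ ψ(M) } ≥ −1`
    (hbound : ∀ x ∈ 𝒦, ∀ a : ℝ, (∃ F ∈ M, a ∈ Set.Icc (ψm F) (ψp F)) → -1 ≤ V x a)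
    -- `V` is a strict identification function for `ψ` on `M`
    (hstrict : ∀ F ∈ M, ∀ a : ℝ, (∃ G ∈ M, a ∈ Set.Icc (ψm G) (ψp G)) →
      ((∫ x, V x a ∂F) = 0 ↔ a ∈ Set.Icc (ψm F) (ψp F)))
    (h : ℝ → ℝ) (hh : ∀ a, h a ∈ Set.Icc (0:ℝ) 1) :
    ∀ F ∈ M, ∀ r : ℝ, (∃ G ∈ M, r ∈ Set.Icc (ψm G) (ψp G)) →
      -- (a) nonnegativity of `e(L,r)`
      (∀ x ∈ 𝒦, 0 ≤ 1 + h r * V x r) ∧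
      -- (b) e-variable for the one-sided null, with equality on the two-sided null
      (ψm F ≤ r → (∫ x, (1 + h r * V x r) ∂F) ≤ 1) ∧
      (r ∈ Set.Icc (ψm F) (ψp F) → (∫ x, (1 + h r * V x r) ∂F) = 1) ∧
      -- (c) consistency: expectation `> 1` under underestimation
      (r < ψm F → 0 < h r → 1 < ∫ x, (1 + h r * V x r) ∂F) := by
  intro F hF r hr
  have := hprob F hF
  obtain ⟨h0, h1⟩ := hh r
  have hm : ψm F ∈ Set.Icc (ψm F) (ψp F) := ⟨le_refl _, hψ F hF⟩
  have hz : ∫ x, V x (ψm F) ∂F = 0 := (hstrict F hF _ ⟨F, hF, hm⟩).2 hm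
  have he : ∫ x, (1 + h r * V x r) ∂F = 1 + h r * ∫ x, V x r ∂F := by
    rw [integral_add (integrable_const _) ((hVint F hF r).const_mul _), integral_const_mul]
    simp
  rw [he]
  refine ⟨fun x hx => ?_, fun hle => ?_, fun hmem => ?_, fun hlt hpos => ?_⟩
  · have := hbound x hx r hr
    nlinarith
  · have : ∫ x, V x r ∂F ≤ ∫ x, V x (ψm F) ∂F :=
      integral_mono (hVint F hF _) (hVint F hF _) (fun x => hmono x hle)
    nlinarith
  · rw [(hstrict F hF r hr).2 hmem]
    simp
  · have h2 : ∫ x, V x (ψm F) ∂F ≤ ∫ x, V x r ∂F :=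
      integral_mono (hVint F hF _) (hVint F hF _) (fun x => hmono x hlt.le)
    have h3 : ∫ x, V x r ∂F ≠ 0 := fun h4 =>
      absurd ((hstrict F hF r hr).1 h4).1 (not_le.2 hlt)
    have h5 : 0 < ∫ x, V x r ∂F := lt_of_le_of_ne (hz ▸ h2) h3.symm
    have := mul_pos hpos h5
    linarith
end

section
/- Let (ρ,φ):M→ℝ×I(ℝ) be a Bayes pair with loss function S:ℝ²→ℝ, where M consists of Borel probability measures supported in 𝒦⊆ℝ. Let h:ℝ²→[0,∞) satisfy inf{h(a,b)(S(x,b)−a) : x∈𝒦, (a,b)∈ψ(M)} ≥ −1, where ψ=(ρ,φ). Then for every random variable L with law F_L∈M and every (r,z)∈ψ(M), the random variable E = 1+h(r,z)(S(L,z)−r) is nonnegative and satisfies E[E]=1 whenever r=ρ(F_L) and z∈φ(F_L); hence E is a precise e-variable for the two-sided hypothesis H̃(ψ): r=ρ(F_L) and z∈φ(F_L). Moreover, if r=ρ(F_L), z∉φ(F_L) and h(r,z)>0, then E[E] > 1. -/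
open MeasureTheory

/-- Proposition bayes2 (i): for a Bayes pair `(ρ, φ)` with loss `S`
and `h ≥ 0` with `h(a,b)(S(x,b) − a) ≥ −1` on `𝒦 × ψ(M)`, the random variable
`E = 1 + h(r,z)(S(L,z) − r)` is nonnegative, has expectation 1 under the
two-sided null `r = ρ(F_L)`, `z ∈ φ(F_L)` (a precise e-variable for `H̃(ψ)`),
and expectation `> 1` when `r = ρ(F_L)`, `z ∉ φ(F_L)` and `h(r,z) > 0`. -/
theorem stmt5
    (𝒦 : Set ℝ) (M : Set (Measure ℝ))
    (hprob : ∀ F ∈ M, IsProbabilityMeasure F)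
    (hsupp : ∀ F ∈ M, F 𝒦ᶜ = 0)
    (S : ℝ → ℝ → ℝ) (ρ : Measure ℝ → ℝ) (φ : Measure ℝ → Set ℝ)
    -- `φ F` is a (nonempty) closed real interval
    (hInterval : ∀ F ∈ M, ∃ a b : ℝ, a ≤ b ∧ φ F = Set.Icc a b)
    (hSint : ∀ F ∈ M, ∀ a : ℝ, Integrable (fun x => S x a) F)
    -- Bayes pair: `φ F` is the argmin of the expected loss, `ρ F` its minimal value
    (hargmin : ∀ F ∈ M, ∀ a : ℝ, a ∈ φ F ↔ ∀ b : ℝ, ∫ x, S x a ∂F ≤ ∫ x, S x b ∂F)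
    (hmin : ∀ F ∈ M, ∀ a ∈ φ F, ρ F = ∫ x, S x a ∂F)
    (h : ℝ → ℝ → ℝ) (hh0 : ∀ a b : ℝ, 0 ≤ h a b)
    -- `inf { h(a,b)(S(x,b) − a) : x ∈ 𝒦, (a,b) ∈ ψ(M) } ≥ −1`
    (hbound : ∀ x ∈ 𝒦, ∀ a b : ℝ,
      (∃ F ∈ M, a = ρ F ∧ b ∈ φ F) → -1 ≤ h a b * (S x b - a)) :
    ∀ F ∈ M, ∀ r z : ℝ, (∃ G ∈ M, r = ρ G ∧ z ∈ φ G) →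
      -- nonnegativity of `E`
      (∀ x ∈ 𝒦, 0 ≤ 1 + h r z * (S x z - r)) ∧
      -- `E` is a precise e-variable for `H̃(ψ)`
      (r = ρ F → z ∈ φ F → (∫ x, (1 + h r z * (S x z - r)) ∂F) = 1) ∧
      -- consistency when the statistic is misspecified
      (r = ρ F → z ∉ φ F → 0 < h r z →
        1 < ∫ x, (1 + h r z * (S x z - r)) ∂F) := by
  intro F hF r z hG
  haveI := hprob F hF
  have key : (∫ x, (1 + h r z * (S x z - r)) ∂F) = 1 + h r z * ((∫ x, S x z ∂F) - r) := by
    have h1 : Integrable (fun x => S x z - r) F := (hSint F hF z).sub (integrable_const r)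
    rw [integral_add (integrable_const _) (h1.const_mul _), integral_const_mul,
      integral_sub (hSint F hF z) (integrable_const r)]
    simp
  refine ⟨fun x hx => ?_, fun hr hz => ?_, fun hr hz hpos => ?_⟩
  · linarith [hbound x hx r z hG]
  · rw [key, hr, ← hmin F hF z hz]
    simp
  · obtain ⟨a, b, hab, hφ⟩ := hInterval F hF
    have ha : a ∈ φ F := by rw [hφ]; exact ⟨le_refl a, hab⟩
    have hlt : r < ∫ x, S x z ∂F := by
      by_contra hcon
      push Not at hcon
      apply hz
      rw [hargmin F hF z]
      intro c
      have h1 := (hargmin F hF a).1 ha c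
      have h2 := hmin F hF a ha
      linarith
    rw [key]
    have := mul_pos hpos (sub_pos.2 hlt)
    linarith
end

section
/- Let (ρ,φ):M→ℝ×I(ℝ) be a Bayes pair with loss function S:ℝ²→ℝ, where M consists of Borel probability measures supported in 𝒦⊆ℝ, and let h:ℝ²→[0,∞) satisfy inf{h(a,b)(S(x,b)−a) : x∈𝒦, (a,b)∈ψ(M)} ≥ −1 for ψ=(ρ,φ). Suppose in addition that a ↦ h(a,b)(S(x,b)−a) is decreasing for each fixed x∈𝒦 and b. Then for every random variable L with law F_L∈M and every (r,z)∈ψ(M) with r ≥ ρ(F_L) and z∈φ(F_L), one has E[1+h(r,z)(S(L,z)−r)] ≤ 1, so E = 1+h(r,z)(S(L,z)−r) is a precise e-variable for the one-sided hypothesis H(ψ): r ≥ ρ(F_L) and z∈φ(F_L). Moreover, if r < ρ(F_L), z∈φ(M) and h(r,z) > 0, then E[E] > 1. -/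
open MeasureTheory

/-- Proposition bayes2 (ii): in the Bayes-pair setting, if moreover
`a ↦ h(a,b)(S(x,b) − a)` is decreasing, then `E = 1 + h(r,z)(S(L,z) − r)` has
expectation at most 1 under the one-sided null `r ≥ ρ(F_L)`, `z ∈ φ(F_L)`
(a precise e-variable for `H(ψ)`), and expectation `> 1` whenever `r < ρ(F_L)`,
`z ∈ φ(M)` and `h(r,z) > 0`. -/
theorem stmt6
    (𝒦 : Set ℝ) (M : Set (Measure ℝ))
    (hprob : ∀ F ∈ M, IsProbabilityMeasure F)
    (hsupp : ∀ F ∈ M, F 𝒦ᶜ = 0)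
    (S : ℝ → ℝ → ℝ) (ρ : Measure ℝ → ℝ) (φ : Measure ℝ → Set ℝ)
    (hInterval : ∀ F ∈ M, ∃ a b : ℝ, a ≤ b ∧ φ F = Set.Icc a b)
    (hSint : ∀ F ∈ M, ∀ a : ℝ, Integrable (fun x => S x a) F)
    (hargmin : ∀ F ∈ M, ∀ a : ℝ, a ∈ φ F ↔ ∀ b : ℝ, ∫ x, S x a ∂F ≤ ∫ x, S x b ∂F)
    (hmin : ∀ F ∈ M, ∀ a ∈ φ F, ρ F = ∫ x, S x a ∂F)
    (h : ℝ → ℝ → ℝ) (hh0 : ∀ a b : ℝ, 0 ≤ h a b)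
    (hbound : ∀ x ∈ 𝒦, ∀ a b : ℝ,
      (∃ F ∈ M, a = ρ F ∧ b ∈ φ F) → -1 ≤ h a b * (S x b - a))
    -- `a ↦ h(a,b)(S(x,b) − a)` is decreasing for each fixed `x ∈ 𝒦` and `b`
    (hmono : ∀ x ∈ 𝒦, ∀ b : ℝ, Antitone (fun a => h a b * (S x b - a))) :
    ∀ F ∈ M,
      (∀ r z : ℝ, (∃ G ∈ M, r = ρ G ∧ z ∈ φ G) →
        (∀ x ∈ 𝒦, 0 ≤ 1 + h r z * (S x z - r)) ∧
        -- `E` is a precise e-variable for the one-sided null `H(ψ)`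
        (ρ F ≤ r → z ∈ φ F → (∫ x, (1 + h r z * (S x z - r)) ∂F) ≤ 1) ∧
        (r = ρ F → z ∈ φ F → (∫ x, (1 + h r z * (S x z - r)) ∂F) = 1)) ∧
      -- consistency: expectation `> 1` under underestimation of `ρ`
      (∀ r z : ℝ, r < ρ F → (∃ G ∈ M, z ∈ φ G) → 0 < h r z →
        1 < ∫ x, (1 + h r z * (S x z - r)) ∂F) := by
  intro F hF
  have hP := hprob F hF
  have key : ∀ r z : ℝ, (∫ x, (1 + h r z * (S x z - r)) ∂F)
      = 1 + h r z * ((∫ x, S x z ∂F) - r) := by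
    intro r z
    have h1 : Integrable (fun x => S x z - r) F := (hSint F hF z).sub (integrable_const r)
    rw [integral_add (integrable_const 1) (h1.const_mul _), integral_const_mul,
      integral_sub (hSint F hF z) (integrable_const r)]
    simp
  refine ⟨fun r z hrz => ⟨fun x hx => ?_, fun hr hz => ?_, fun hr hz => ?_⟩,
    fun r z hr _ hpos => ?_⟩
  · linarith [hbound x hx r z hrz]
  · rw [key, ← hmin F hF z hz]
    nlinarith [mul_nonneg (hh0 r z) (sub_nonneg.2 hr)]
  · rw [key, ← hmin F hF z hz, hr]
    simp
  · rw [key]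
    obtain ⟨a, b, hab, he⟩ := hInterval F hF
    have ha : a ∈ φ F := by rw [he]; exact Set.left_mem_Icc.2 hab
    have h2 := (hargmin F hF a).1 ha z
    rw [← hmin F hF a ha] at h2
    have : 0 < h r z * ((∫ x, S x z ∂F) - r) := mul_pos hpos (by linarith)
    linarith
end

section
/- Let (Ω,𝔽,Q) be a probability space with a filtration (ℱ_t)_{t=0,…,T}. Let N_0 be a random variable taking values in {1,…,T}, independent of ℱ_T, and for each n in the support of N_0 let 0 = t_0^{(n)} < t_1^{(n)} < ⋯ < t_n^{(n)} = T be a prespecified partition. Let (M̃^{re}_t)_{t∈𝕋} be the process obtained by running an e-process and restarting it at value 1 at the start of each block, and assume that under Q, for each n and each i∈{1,…,n}, the restarted block process (M̃^{re}_t)_{t∈(t_{i−1}^{(n)}, t_i^{(n)}]}, prepended with the value 1 at time t_{i−1}^{(n)}, is a nonnegative supermartingale. Then for every α∈(0,1), E^Q[ (1/N_0) Σ_{i=1}^{N_0} 1{ sup_{t_{i−1}^{(N_0)} < t ≤ t_i^{(N_0)}} M̃^{re}_t ≥ 1/α } ] ≤ α; that is, the per comparison error rate (PCER) of the restarted e-test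 at threshold 1/α is at most α. -/
open MeasureTheory

theorem ville_aux {Ω : Type*} {m0 : MeasurableSpace Ω}
    (μ : Measure Ω) [IsProbabilityMeasure μ] (ℱ : Filtration ℕ m0)
    (M : ℕ → Ω → ℝ) (a b : ℕ) (c : ℝ)
    (h1 : ∀ s, a < s → s ≤ b →
        StronglyMeasurable[ℱ s] (M s) ∧ Integrable (M s) μ ∧ 0 ≤ᵐ[μ] M s)
    (h2 : μ[M (a + 1) | ℱ a] ≤ᵐ[μ] fun _ => 1)
    (h3 : ∀ s, a < s → s + 1 ≤ b → μ[M (s + 1) | ℱ s] ≤ᵐ[μ] M s)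
    (k : ℕ) (hk : a + k + 1 ≤ b) :
    MeasurableSet[ℱ (a + k + 1)] {ω | ∃ s, a < s ∧ s ≤ a + k + 1 ∧ c ≤ M s ω} ∧
    c * μ.real {ω | ∃ s, a < s ∧ s ≤ a + k + 1 ∧ c ≤ M s ω} +
      ∫ ω in {ω | ∃ s, a < s ∧ s ≤ a + k + 1 ∧ c ≤ M s ω}ᶜ, M (a + k + 1) ω ∂μ ≤ 1 := by
  induction k with
  | zero =>
    obtain ⟨hm, hi, hn⟩ := h1 (a + 0 + 1) (by omega) hk
    have hE : {ω | ∃ s, a < s ∧ s ≤ a + 0 + 1 ∧ c ≤ M s ω} = {ω | c ≤ M (a + 0 + 1) ω} := by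
      ext ω
      constructor
      · rintro ⟨s, hs1, hs2, hs3⟩
        obtain rfl : s = a + 0 + 1 := by omega
        exact hs3
      · intro h
        exact ⟨a + 0 + 1, by omega, le_rfl, h⟩
    rw [hE]
    have hA : MeasurableSet[ℱ (a + 0 + 1)] {ω | c ≤ M (a + 0 + 1) ω} :=
      hm.measurable (measurableSet_Ici (a := c))
    refine ⟨hA, ?_⟩
    have hA' := ℱ.le _ _ hA
    have e1 := setIntegral_ge_of_const_le_real hA' (measure_ne_top μ _) (fun ω hω => hω)
      hi.integrableOn
    have e2 := integral_add_compl hA' hi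
    have e3 : ∫ ω, M (a + 0 + 1) ω ∂μ ≤ 1 := by
      rw [← integral_condExp (ℱ.le a)]
      calc _ ≤ ∫ ω, (1 : ℝ) ∂μ := integral_mono_ae integrable_condExp (integrable_const _) h2
        _ = 1 := by simp
    linarith
  | succ k ih =>
    obtain ⟨hB, ih⟩ := ih (by omega)
    obtain ⟨hm, hi, hn⟩ := h1 (a + (k + 1) + 1) (by omega) hk
    obtain ⟨hm', hi', hn'⟩ := h1 (a + k + 1) (by omega) (by omega)
    set B := {ω | ∃ s, a < s ∧ s ≤ a + k + 1 ∧ c ≤ M s ω} with hBdef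
    have hE : {ω | ∃ s, a < s ∧ s ≤ a + (k + 1) + 1 ∧ c ≤ M s ω}
        = B ∪ (Bᶜ ∩ {ω | c ≤ M (a + (k + 1) + 1) ω}) := by
      ext ω
      simp only [Set.mem_union, Set.mem_inter_iff, Set.mem_compl_iff]
      constructor
      · rintro ⟨s, hs1, hs2, hs3⟩
        by_cases hb : ω ∈ B
        · exact Or.inl hb
        · refine Or.inr ⟨hb, ?_⟩
          have : s = a + (k + 1) + 1 := by
            by_contra hne
            exact hb ⟨s, hs1, by omega, hs3⟩
          subst this
          exact hs3
      · rintro (⟨s, hs1, hs2, hs3⟩ | ⟨_, h⟩)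
        · exact ⟨s, hs1, by omega, hs3⟩
        · exact ⟨_, by omega, le_rfl, h⟩
    rw [hE]
    have hA : MeasurableSet[ℱ (a + (k + 1) + 1)] {ω | c ≤ M (a + (k + 1) + 1) ω} :=
      hm.measurable (measurableSet_Ici (a := c))
    set D := {ω | c ≤ M (a + (k + 1) + 1) ω} with hD
    have hB2 : MeasurableSet[ℱ (a + (k + 1) + 1)] B := ℱ.mono (by omega) _ hB
    have hC := hB2.compl.inter hA
    refine ⟨hB2.union hC, ?_⟩
    have hB0 := ℱ.le _ _ hB2
    have hC0 := ℱ.le _ _ hC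
    have hA0 := ℱ.le _ _ hA
    have e0 : μ.real (B ∪ (Bᶜ ∩ D)) = μ.real B + μ.real (Bᶜ ∩ D) :=
      measureReal_union (by
        rw [Set.disjoint_left]; intro x hx hx2; exact hx2.1 hx) hC0
    have e1 := setIntegral_ge_of_const_le_real (f := M (a + (k + 1) + 1)) (c := c) hC0
      (measure_ne_top μ _) (fun ω hω => hω.2) hi.integrableOn
    have hcs : (B ∪ (Bᶜ ∩ D))ᶜ = Bᶜ \ D := by
      ext x; simp only [Set.mem_compl_iff, Set.mem_union, Set.mem_inter_iff, Set.mem_sdiff]; tauto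
    have e2 := integral_inter_add_sdiff (μ := μ) (s := Bᶜ) (f := M (a + (k + 1) + 1)) hA0
      hi.integrableOn
    have e3 : ∫ ω in Bᶜ, M (a + (k + 1) + 1) ω ∂μ ≤ ∫ ω in Bᶜ, M (a + k + 1) ω ∂μ := by
      rw [← setIntegral_condExp (ℱ.le (a + k + 1)) hi hB.compl]
      exact setIntegral_mono_ae integrable_condExp.integrableOn hi'.integrableOn
        (h3 (a + k + 1) (by omega) (by omega))
    rw [hcs, e0]
    linarith

theorem ville_block {Ω : Type*} {m0 : MeasurableSpace Ω}
    (μ : Measure Ω) [IsProbabilityMeasure μ] (ℱ : Filtration ℕ m0)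
    (M : ℕ → Ω → ℝ) (a b : ℕ) (hab : a < b) (α : ℝ) (hα : 0 < α)
    (h1 : ∀ s, a < s → s ≤ b →
        StronglyMeasurable[ℱ s] (M s) ∧ Integrable (M s) μ ∧ 0 ≤ᵐ[μ] M s)
    (h2 : μ[M (a + 1) | ℱ a] ≤ᵐ[μ] fun _ => 1)
    (h3 : ∀ s, a < s → s + 1 ≤ b → μ[M (s + 1) | ℱ s] ≤ᵐ[μ] M s) :
    MeasurableSet[ℱ b] {ω | ∃ s, a < s ∧ s ≤ b ∧ 1 / α ≤ M s ω} ∧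
    μ.real {ω | ∃ s, a < s ∧ s ≤ b ∧ 1 / α ≤ M s ω} ≤ α := by
  obtain ⟨k, rfl⟩ : ∃ k, b = a + k + 1 := ⟨b - a - 1, by omega⟩
  obtain ⟨hm, h⟩ := ville_aux μ ℱ M a (a + k + 1) (1 / α) h1 h2 h3 k le_rfl
  refine ⟨hm, ?_⟩
  have hn := setIntegral_nonneg_of_ae (μ := μ)
    (s := {ω | ∃ s, a < s ∧ s ≤ a + k + 1 ∧ 1 / α ≤ M s ω}ᶜ)
    (h1 (a + k + 1) (by omega) le_rfl).2.2
  have h4 : 1 / α * μ.real {ω | ∃ s, a < s ∧ s ≤ a + k + 1 ∧ 1 / α ≤ M s ω} ≤ 1 := by linarith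
  rwa [div_mul_eq_mul_div, one_mul, div_le_one hα] at h4

open Classical in
/-- PCER control with restarts at prespecified time points:
with a random number of blocks `N₀` independent of `ℱ_T`, prespecified
partitions `0 = t₀⁽ⁿ⁾ < ⋯ < tₙ⁽ⁿ⁾ = T`, and a restarted e-process `M̃ʳᵉ` whose
block processes (prepended with the value 1) are nonnegative supermartingales,
the per comparison error rate at threshold `1/α` is at most `α`. -/
theorem stmt13 {Ω : Type*} {m0 : MeasurableSpace Ω}
    (μ : Measure Ω) [IsProbabilityMeasure μ]
    (ℱ : Filtration ℕ m0) (T : ℕ)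
    (N0 : Ω → ℕ) (hN0meas : Measurable N0)
    (hN0range : ∀ ω, 1 ≤ N0 ω ∧ N0 ω ≤ T)
    -- `N₀` is independent of `ℱ_T`
    (hIndep : ProbabilityTheory.Indep
      (MeasurableSpace.comap N0 ⊤) (ℱ T) μ)
    -- prespecified partitions `t₀⁽ⁿ⁾ = 0 < t₁⁽ⁿ⁾ < ⋯ < tₙ⁽ⁿ⁾ = T`
    (tp : ℕ → ℕ → ℕ)
    (htp0 : ∀ n, tp n 0 = 0)
    (htpT : ∀ n, 1 ≤ n → n ≤ T → tp n n = T)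
    (htpmono : ∀ n i j, i < j → j ≤ n → tp n i < tp n j)
    (Mre : ℕ → Ω → ℝ)
    -- each restarted block, prepended with the value 1, is a nonnegative
    -- supermartingale (for each `n` in the support of `N₀` and each block `i`)
    (hblock : ∀ n, μ (N0 ⁻¹' {n}) ≠ 0 → ∀ i, 1 ≤ i → i ≤ n →
      (∀ s, tp n (i - 1) < s → s ≤ tp n i →
        StronglyMeasurable[ℱ s] (Mre s) ∧ Integrable (Mre s) μ ∧ 0 ≤ᵐ[μ] Mre s) ∧
      (μ[Mre (tp n (i - 1) + 1) | ℱ (tp n (i - 1))] ≤ᵐ[μ] fun _ => 1) ∧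
      (∀ s, tp n (i - 1) < s → s + 1 ≤ tp n i →
        μ[Mre (s + 1) | ℱ s] ≤ᵐ[μ] Mre s))
    (α : ℝ) (hα : α ∈ Set.Ioo (0:ℝ) 1) :
    -- PCER control: `E[ (1/N₀) Σᵢ 1{block i rejects} ] ≤ α`
    ∫ ω, (∑ i ∈ Finset.Icc 1 (N0 ω),
        if ∃ s, tp (N0 ω) (i - 1) < s ∧ s ≤ tp (N0 ω) i ∧ 1 / α ≤ Mre s ω
        then (1:ℝ) else 0) / (N0 ω : ℝ) ∂μ ≤ α := by
  set A : ℕ → ℕ → Set Ω := fun n i =>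
    {ω | ∃ s, tp n (i - 1) < s ∧ s ≤ tp n i ∧ 1 / α ≤ Mre s ω} with hAdef
  set S : Finset ℕ := (Finset.Icc 1 T).filter (fun n => μ (N0 ⁻¹' {n}) ≠ 0) with hS
  have hNm : ∀ n, MeasurableSet (N0 ⁻¹' {n}) := fun n => hN0meas (measurableSet_singleton n)
  have key : ∀ n ∈ S, ∀ i ∈ Finset.Icc 1 n,
      MeasurableSet[ℱ T] (A n i) ∧ μ.real (A n i) ≤ α := by
    intro n hn i hi
    rw [hS, Finset.mem_filter, Finset.mem_Icc] at hn
    rw [Finset.mem_Icc] at hi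
    obtain ⟨b1, b2, b3⟩ := hblock n hn.2 i hi.1 hi.2
    have := ville_block μ ℱ Mre (tp n (i - 1)) (tp n i)
      (htpmono n _ _ (by omega) hi.2) α hα.1 b1 b2 b3
    refine ⟨ℱ.mono ?_ _ this.1, this.2⟩
    rw [← htpT n hn.1.1 hn.1.2]
    rcases hi.2.eq_or_lt with h | h
    · rw [h]
    · exact (htpmono n i n h le_rfl).le
  have hae : ∀ᵐ ω ∂μ, N0 ω ∈ S := by
    have : ∀ᵐ ω ∂μ, ∀ n, μ (N0 ⁻¹' {n}) = 0 → N0 ω ≠ n := by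
      rw [ae_all_iff]
      intro n
      by_cases h : μ (N0 ⁻¹' {n}) = 0
      · have := measure_eq_zero_iff_ae_notMem.1 h
        filter_upwards [this] with ω hω _ h'
        exact hω h'
      · exact Filter.Eventually.of_forall fun ω h' => absurd h' h
    filter_upwards [this] with ω hω
    rw [hS, Finset.mem_filter, Finset.mem_Icc]
    exact ⟨hN0range ω, fun h => hω _ h rfl⟩
  have hmeas : ∀ n ∈ S, ∀ i ∈ Finset.Icc 1 n, MeasurableSet (N0 ⁻¹' {n} ∩ A n i) :=
    fun n hn i hi => (hNm n).inter (ℱ.le _ _ (key n hn i hi).1)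
  have hint : ∀ n ∈ S, ∀ i ∈ Finset.Icc 1 n,
      Integrable ((N0 ⁻¹' {n} ∩ A n i).indicator (fun _ => (1 : ℝ) / n)) μ :=
    fun n hn i hi => (integrable_const _).indicator (hmeas n hn i hi)
  have heq : (fun ω => (∑ i ∈ Finset.Icc 1 (N0 ω),
        if ∃ s, tp (N0 ω) (i - 1) < s ∧ s ≤ tp (N0 ω) i ∧ 1 / α ≤ Mre s ω
        then (1:ℝ) else 0) / (N0 ω : ℝ)) =ᵐ[μ]
      fun ω => ∑ n ∈ S, ∑ i ∈ Finset.Icc 1 n,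
        (N0 ⁻¹' {n} ∩ A n i).indicator (fun _ => (1 : ℝ) / n) ω := by
    filter_upwards [hae] with ω hω
    rw [Finset.sum_eq_single_of_mem _ hω, Finset.sum_div]
    · refine Finset.sum_congr rfl fun i _ => ?_
      by_cases h : ∃ s, tp (N0 ω) (i - 1) < s ∧ s ≤ tp (N0 ω) i ∧ 1 / α ≤ Mre s ω
      · have hm : ω ∈ N0 ⁻¹' {N0 ω} ∩ A (N0 ω) i := ⟨rfl, h⟩
        rw [Set.indicator_of_mem hm, if_pos h]
      · have hm : ω ∉ N0 ⁻¹' {N0 ω} ∩ A (N0 ω) i := fun h' => h h'.2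
        rw [Set.indicator_of_notMem hm, if_neg h, zero_div]
    · intro n _ hne
      refine Finset.sum_eq_zero fun i _ => ?_
      exact Set.indicator_of_notMem (fun h' => hne h'.1.symm) _
  rw [integral_congr_ae heq, integral_finsetSum _
    (fun n hn => integrable_finsetSum _ (fun i hi => hint n hn i hi))]
  have hterm : ∀ n ∈ S, ∫ ω, ∑ i ∈ Finset.Icc 1 n,
        (N0 ⁻¹' {n} ∩ A n i).indicator (fun _ => (1 : ℝ) / n) ω ∂μ
        ≤ μ.real (N0 ⁻¹' {n}) * α := by
    intro n hn
    have hn1 : (0 : ℝ) < n := by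
      have : 1 ≤ n := by
        rw [hS, Finset.mem_filter, Finset.mem_Icc] at hn
        exact hn.1.1
      exact_mod_cast this
    rw [integral_finsetSum _ (fun i hi => hint n hn i hi)]
    calc _ ≤ ∑ i ∈ Finset.Icc 1 n, μ.real (N0 ⁻¹' {n}) * α * (1 / n) := by
          refine Finset.sum_le_sum fun i hi => ?_
          rw [integral_indicator_const _ (hmeas n hn i hi), smul_eq_mul]
          have hind : μ (N0 ⁻¹' {n} ∩ A n i) = μ (N0 ⁻¹' {n}) * μ (A n i) :=
            (ProbabilityTheory.Indep_iff _ _ μ).1 hIndep _ _ ⟨{n}, trivial, rfl⟩ (key n hn i hi).1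
          have : μ.real (N0 ⁻¹' {n} ∩ A n i) = μ.real (N0 ⁻¹' {n}) * μ.real (A n i) := by
            simp only [measureReal_def, hind, ENNReal.toReal_mul]
          rw [this]
          have := (key n hn i hi).2
          gcongr
      _ = μ.real (N0 ⁻¹' {n}) * α := by
          rw [Finset.sum_const, Nat.card_Icc, nsmul_eq_mul]
          simp only [Nat.add_sub_cancel]
          field_simp
  refine (Finset.sum_le_sum hterm).trans ?_
  rw [← Finset.sum_mul]
  have hs : ∑ n ∈ S, μ.real (N0 ⁻¹' {n}) ≤ 1 := by
    rw [← measureReal_biUnion_finset _ (fun n _ => hNm n)]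
    · exact measureReal_le_one
    · intro i _ j _ hij
      exact Set.disjoint_left.2 fun x hx hx2 => hij (hx.symm.trans hx2)
  have := hα.1
  nlinarith
end

section
/- Let L be an integrable real-valued random variable with distribution function F, let p∈(0,1), and define VaR⁻_p(L) = inf{x : F(x) ≥ p}, VaR⁺_p(L) = inf{x : F(x) > p}, and the Expected Shortfall ES_p(L) = (1/(1−p)) ∫_p^1 VaR⁻_u(L) du. Then for every z ∈ [VaR⁻_p(L), VaR⁺_p(L)] one has E[(L−z)_+] = (1−p)(ES_p(L) − z). Consequently, for every r ≥ ES_p(L) with r > z, E[ (L−z)_+ / ((1−p)(r−z)) ] ≤ 1, with equality if and only if r = ES_p(L); and for every r with z < r < ES_p(L), E[ (L−z)_+ / ((1−p)(r−z)) ] > 1. Hence (L−z)_+/((1−p)(r−z)) is a precise e-variable for the hypothesis H: r ≥ ES_p(L) and z ∈ [VaR⁻_p(L), VaR⁺_p(L)], over all integrable L. -/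
open MeasureTheory

lemma quant_gal (ν : Measure ℝ) [IsProbabilityMeasure ν] (u : ℝ) (hu : u ∈ Set.Ioo (0:ℝ) 1) (x : ℝ) :
    sInf {x : ℝ | u ≤ ProbabilityTheory.cdf ν x} ≤ x ↔ u ≤ ProbabilityTheory.cdf ν x := by
  set F := ProbabilityTheory.cdf ν with hF
  have hne : {x : ℝ | u ≤ F x}.Nonempty := by
    obtain ⟨y, hy⟩ := ((ProbabilityTheory.tendsto_cdf_atTop ν).eventually (lt_mem_nhds hu.2)).exists
    exact ⟨y, hy.le⟩
  have hbdd : BddBelow {x : ℝ | u ≤ F x} := by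
    obtain ⟨y, hy⟩ := ((ProbabilityTheory.tendsto_cdf_atBot ν).eventually (gt_mem_nhds hu.1)).exists
    refine ⟨y, fun w hw => ?_⟩
    by_contra h
    have h1 := F.mono (not_le.mp h).le
    have h2 : u ≤ F w := hw
    have h3 : F y < u := hy
    linarith
  have hmem : u ≤ F (sInf {x : ℝ | u ≤ F x}) := by
    have hc := F.right_continuous (sInf {x : ℝ | u ≤ F x})
    have ht : Filter.Tendsto F (nhdsWithin (sInf {x : ℝ | u ≤ F x}) (Set.Ioi (sInf {x : ℝ | u ≤ F x}))) (nhds (F (sInf {x : ℝ | u ≤ F x}))) :=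
      Filter.Tendsto.mono_left hc (nhdsWithin_mono _ Set.Ioi_subset_Ici_self)
    refine ge_of_tendsto ht ?_
    filter_upwards [self_mem_nhdsWithin] with y hy
    obtain ⟨w, hw, hwy⟩ := exists_lt_of_csInf_lt hne hy
    exact le_trans hw (F.mono hwy.le)
  exact ⟨fun h => hmem.trans (F.mono h), fun h => csInf_le hbdd h⟩

/-- for an integrable random variable `L`, `p ∈ (0,1)`,
`VaR⁻_p`, `VaR⁺_p` the lower/upper quantiles and
`ES_p(L) = (1/(1−p)) ∫_p^1 VaR⁻_u(L) du`: for every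
`z ∈ [VaR⁻_p(L), VaR⁺_p(L)]`, `E[(L−z)_+] = (1−p)(ES_p(L) − z)`; consequently
for `r ≥ ES_p(L)` with `r > z`, `E[(L−z)_+/((1−p)(r−z))] ≤ 1` with equality iff
`r = ES_p(L)`, and for `z < r < ES_p(L)`, `E[(L−z)_+/((1−p)(r−z))] > 1`; hence
`(L−z)_+/((1−p)(r−z))` is a precise e-variable for `H : r ≥ ES_p(L)` and
`z ∈ [VaR⁻_p(L), VaR⁺_p(L)]`. -/
theorem stmt19 {Ω : Type*} {m0 : MeasurableSpace Ω}
    (μ : Measure Ω) [IsProbabilityMeasure μ]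
    (L : Ω → ℝ) (hL : Measurable L) (hint : Integrable L μ)
    (p : ℝ) (hp : p ∈ Set.Ioo (0:ℝ) 1)
    -- `VaR⁻_u(L) = inf{x : F(x) ≥ u}`
    (varm : ℝ → ℝ)
    (hvarm : ∀ u : ℝ, varm u = sInf {x : ℝ | u ≤ (μ {ω | L ω ≤ x}).toReal})
    -- `VaR⁺_p(L) = inf{x : F(x) > p}`
    (varp : ℝ)
    (hvarp : varp = sInf {x : ℝ | p < (μ {ω | L ω ≤ x}).toReal})
    -- `ES_p(L) = (1/(1−p)) ∫_p^1 VaR⁻_u(L) du`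
    (es : ℝ)
    (hes : es = (1 / (1 - p)) * ∫ u in p..1, varm u) :
    ∀ z ∈ Set.Icc (varm p) varp,
      -- `E[(L−z)_+] = (1−p)(ES_p(L) − z)`
      (∫ ω, max (L ω - z) 0 ∂μ) = (1 - p) * (es - z) ∧
      -- e-variable property with equality iff `r = ES_p(L)`
      (∀ r : ℝ, es ≤ r → z < r →
        (∫ ω, max (L ω - z) 0 / ((1 - p) * (r - z)) ∂μ) ≤ 1 ∧
        ((∫ ω, max (L ω - z) 0 / ((1 - p) * (r - z)) ∂μ) = 1 ↔ r = es)) ∧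
      -- consistency under underestimation of `ES_p`
      (∀ r : ℝ, z < r → r < es →
        1 < ∫ ω, max (L ω - z) 0 / ((1 - p) * (r - z)) ∂μ) := by
  have hp0 := hp.1
  have hp1 := hp.2
  set ν := μ.map L with hν
  haveI : IsProbabilityMeasure ν := Measure.isProbabilityMeasure_map hL.aemeasurable
  have hF : ∀ x, (μ {ω | L ω ≤ x}).toReal = ProbabilityTheory.cdf ν x := by
    intro x
    rw [ProbabilityTheory.cdf_eq_real, measureReal_def, hν, Measure.map_apply hL measurableSet_Iic]
    rfl
  simp only [hF] at hvarm hvarp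
  have gal : ∀ u ∈ Set.Ioo (0:ℝ) 1, ∀ x, varm u ≤ x ↔ u ≤ ProbabilityTheory.cdf ν x := by
    intro u hu x
    rw [hvarm]
    exact quant_gal ν u hu x
  have hmono : MonotoneOn varm (Set.Ioo (0:ℝ) 1) := by
    intro a ha b hb hab
    rw [gal a ha]
    exact hab.trans ((gal b hb _).1 le_rfl)
  set lam : Measure ℝ := volume.restrict (Set.Ioo (0:ℝ) 1) with hlam
  haveI : IsProbabilityMeasure lam := ⟨by simp [hlam]⟩
  have hae : AEMeasurable varm lam := aemeasurable_restrict_of_monotoneOn measurableSet_Ioo hmono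
  have hmap : lam.map varm = ν := by
    haveI : IsProbabilityMeasure (lam.map varm) := Measure.isProbabilityMeasure_map hae
    refine Measure.ext_of_Iic _ _ fun x => ?_
    rw [Measure.map_apply_of_aemeasurable hae measurableSet_Iic]
    have h1 : lam (varm ⁻¹' Set.Iic x) = lam (Set.Iic (ProbabilityTheory.cdf ν x)) := by
      refine measure_congr ?_
      have : ∀ᵐ u ∂lam, u ∈ Set.Ioo (0:ℝ) 1 := ae_restrict_mem measurableSet_Ioo
      filter_upwards [this] with u hu
      exact propext (gal u hu x)
    rw [h1, hlam, restrict_Ioo_eq_restrict_Ioc, Measure.restrict_apply measurableSet_Iic,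
      Set.inter_comm, Set.Ioc_inter_Iic, min_eq_right (ProbabilityTheory.cdf_le_one ν x),
      Real.volume_Ioc, sub_zero, ProbabilityTheory.ofReal_cdf]
  intro z hz
  have hint1 : Integrable varm lam := by
    have h1 : Integrable (fun x : ℝ => x) ν := by
      rw [hν]
      exact (integrable_map_measure measurable_id.aestronglyMeasurable hL.aemeasurable).2 hint
    rw [← hmap] at h1
    exact (integrable_map_measure measurable_id.aestronglyMeasurable hae).1 h1
  have hmeas : Measurable (fun x : ℝ => max (x - z) 0) := by fun_prop
  have key : (∫ ω, max (L ω - z) 0 ∂μ) = (1 - p) * (es - z) := by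
    have e1 : (∫ ω, max (L ω - z) 0 ∂μ) = ∫ u, max (varm u - z) 0 ∂lam := by
      rw [← integral_map (f := fun x : ℝ => max (x - z) 0) hL.aemeasurable
        hmeas.aestronglyMeasurable, ← hν, ← hmap,
        integral_map hae hmeas.aestronglyMeasurable]
    have hsub : Set.Ioo p 1 ⊆ Set.Ioo (0:ℝ) 1 := Set.Ioo_subset_Ioo_left hp0.le
    have e2 : (∫ u, max (varm u - z) 0 ∂lam) = ∫ u in Set.Ioo p 1, (varm u - z) := by
      rw [hlam]
      rw [← integral_indicator measurableSet_Ioo, ← integral_indicator measurableSet_Ioo]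
      congr 1
      ext u
      by_cases hu : u ∈ Set.Ioo (0:ℝ) 1
      · by_cases hup : p < u
        · have hu' : u ∈ Set.Ioo p 1 := ⟨hup, hu.2⟩
          rw [Set.indicator_of_mem hu, Set.indicator_of_mem hu']
          have hle : varp ≤ varm u := by
            rw [hvarp]
            refine csInf_le ?_ ?_
            · refine ⟨varm p, fun w hw => ?_⟩
              exact (gal p hp w).2 (le_of_lt hw)
            · exact hup.trans_le ((gal u hu _).1 le_rfl)
          exact max_eq_left (by linarith [hz.2])
        · have hu' : u ∉ Set.Ioo p 1 := fun h => hup h.1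
          rw [Set.indicator_of_mem hu, Set.indicator_of_notMem hu']
          have := hmono hu hp (not_lt.1 hup)
          exact max_eq_right (by linarith [hz.1])
      · have hu' : u ∉ Set.Ioo p 1 := fun h => hu (hsub h)
        rw [Set.indicator_of_notMem hu, Set.indicator_of_notMem hu']
    have hi2 : IntegrableOn varm (Set.Ioo p 1) := IntegrableOn.mono_set hint1 hsub
    have h1p : (1 - p) ≠ 0 := by linarith
    rw [e1, e2, integral_sub hi2 (by simp), hes, intervalIntegral.integral_of_le hp1.le,
      integral_Ioc_eq_integral_Ioo]
    simp [hp1.le]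
    field_simp
  have h1p : 0 < 1 - p := by linarith
  have hdiv : ∀ r, z < r → (∫ ω, max (L ω - z) 0 / ((1 - p) * (r - z)) ∂μ) = (es - z) / (r - z) := by
    intro r hr
    have : 0 < r - z := by linarith
    rw [integral_div, key, mul_div_mul_left _ _ h1p.ne']
  refine ⟨key, fun r her hzr => ?_, fun r hzr hre => ?_⟩
  · have : 0 < r - z := by linarith
    rw [hdiv r hzr, div_le_one this, div_eq_one_iff_eq this.ne']
    exact ⟨by linarith, fun h => by linarith, fun h => by linarith⟩
  · have : 0 < r - z := by linarith
    rw [hdiv r hzr, one_lt_div this]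
    linarith
end
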